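/- arXiv:2411.04560 — 2 statements merged into one kernel-verified Lean document; each statement's English description precedes it below -/
import Mathlib

section
/- Let G be a finite connected simple graph and suppose there is a vertex s of degree at least 2 in G such that the subgraph of G induced on V(G) ∖ {s} is 2-regular (every vertex other than s has exactly two neighbors other than s). Then DOM_t(G) = |V(G)| − 1; that is, there exists a valid orientation D of G with γ_t(D) = |V(G)| − 1, and every valid orientation D' of G satisfies γ_t(D') ≤ |V(G)| − 1. -/
/-- A set `S` is a total dominating set of the digraph `D` (given as its arc
relation) if every vertex has an in-neighbor belonging to `S`. -/
def TotalDomSet {V : Type} (D : V → V → Prop) (S : Set V) : Prop :=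
  ∀ v : V, ∃ u ∈ S, D u v

/-- The total domination number of a digraph: the least cardinality of a total
dominating set. -/
noncomputable def totalDomNum {V : Type} (D : V → V → Prop) : ℕ :=
  sInf {n | ∃ S : Set V, TotalDomSet D S ∧ S.ncard = n}

/-- `D` is an orientation of the simple graph `G`: every arc of `D` lies on an
edge of `G`, and every edge of `G` carries exactly one of the two possible arcs. -/
def IsOrientation {V : Type} (G : SimpleGraph V) (D : V → V → Prop) : Prop :=
  (∀ u v : V, D u v → G.Adj u v) ∧ ∀ u v : V, G.Adj u v → (D u v ↔ ¬ D v u)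

/-- An orientation (digraph) is valid if every vertex has at least one in-neighbor. -/
def IsValidOrientation {V : Type} (D : V → V → Prop) : Prop :=
  ∀ v : V, ∃ u : V, D u v

/-- The upper orientable total domination number of `G`. -/
noncomputable def DOMt {V : Type} [Fintype V] (G : SimpleGraph V) : ℕ :=
  sSup {n | ∃ D : V → V → Prop, IsOrientation G D ∧ IsValidOrientation D ∧ totalDomNum D = n}

/-- The lower orientable total domination number of `G`. -/
noncomputable def domt {V : Type} [Fintype V] (G : SimpleGraph V) : ℕ :=
  sInf {n | ∃ D : V → V → Prop, IsOrientation G D ∧ IsValidOrientation D ∧ totalDomNum D = n}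

open Finset in
/-- In a graph of maximum degree at most two, every edge can be assigned one of its endpoints so
that distinct edges receive distinct endpoints. -/
theorem exists_injective_endpoint {W : Type} [Fintype W] (H : SimpleGraph W)
    (hdeg : ∀ v, (H.neighborSet v).ncard ≤ 2) :
    ∃ g : H.edgeSet → W, Function.Injective g ∧ ∀ e : H.edgeSet, g e ∈ (e : Sym2 W) := by
  classical
  obtain ⟨g, hg, hmem⟩ := (all_card_le_biUnion_card_iff_exists_injective
    (fun e : H.edgeSet => (e : Sym2 W).toFinset)).1 fun A => by
      refine Nat.le_of_mul_le_mul_right (card_mul_le_card_mul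
        (fun (e : H.edgeSet) (v : W) => v ∈ (e : Sym2 W)) (m := 2) (n := 2) ?_ ?_) two_pos
      · intro e he
        rw [← Sym2.card_toFinset_of_not_isDiag _ (H.not_isDiag_of_mem_edgeSet e.2)]
        refine card_le_card fun v hv => mem_filter.2 ⟨mem_biUnion.2 ⟨e, he, hv⟩, ?_⟩
        simpa using hv
      · intro v _
        calc _ ≤ #(H.incidenceFinset v) := by
              refine card_le_card_of_injOn Subtype.val (fun e he => ?_)
                Subtype.val_injective.injOn
              simpa [SimpleGraph.mem_incidenceFinset, SimpleGraph.incidenceSet] using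
                (mem_filter.1 he).2
          _ ≤ 2 := by
              rw [SimpleGraph.card_incidenceFinset_eq_degree,
                ← SimpleGraph.card_neighborFinset_eq_degree, SimpleGraph.neighborFinset,
                ← Set.ncard_eq_toFinset_card']
              exact hdeg v
  exact ⟨g, hg, fun e => Sym2.mem_toFinset.1 (hmem e)⟩

/-- A finite 2-regular graph has an orientation in which every vertex has at most one in-neighbor,
at least one in-neighbor and at least one out-neighbor. -/
theorem exists_orientation_of_two_regular {W : Type} [Fintype W] (H : SimpleGraph W)
    (hdeg : ∀ v, (H.neighborSet v).ncard = 2) :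
    ∃ D : W → W → Prop, IsOrientation H D ∧ (∀ u u' v, D u v → D u' v → u = u') ∧
      IsValidOrientation D ∧ ∀ v, ∃ w, D v w := by
  obtain ⟨g, hg, hmem⟩ := exists_injective_endpoint H fun v => (hdeg v).le
  let D : W → W → Prop := fun u v => ∃ h : H.Adj u v, g ⟨s(u, v), h⟩ = v
  have hor : IsOrientation H D := by
    refine ⟨fun u v h => h.1, fun u v h => ?_⟩
    have hswap : (⟨s(v, u), h.symm⟩ : H.edgeSet) = ⟨s(u, v), h⟩ := Subtype.ext Sym2.eq_swap
    have hend : g ⟨s(u, v), h⟩ = u ∨ g ⟨s(u, v), h⟩ = v := by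
      simpa using hmem ⟨s(u, v), h⟩
    have hne := h.ne
    constructor
    · rintro ⟨_, h1⟩ ⟨_, h2⟩
      rw [hswap, h1] at h2
      exact hne h2.symm
    · intro hvu
      exact ⟨h, hend.resolve_left fun h1 => hvu ⟨h.symm, by rw [hswap, h1]⟩⟩
  have huniq : ∀ u u' v, D u v → D u' v → u = u' := by
    rintro u u' v ⟨h, h1⟩ ⟨h', h2⟩
    have := congrArg Subtype.val (hg (h1.trans h2.symm))
    simpa [h.ne] using this
  have hout : ∀ v, ∃ w, D v w := by
    intro v
    obtain ⟨a, b, hab, hN⟩ := Set.ncard_eq_two.1 (hdeg v)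
    have ha : H.Adj v a := by simpa using hN.ge (Set.mem_insert a {b})
    have hb : H.Adj v b := by simpa using hN.ge (Set.mem_insert_of_mem a rfl)
    by_contra! hno
    have hav := (hor.2 a v ha.symm).2 (hno a)
    have hbv := (hor.2 b v hb.symm).2 (hno b)
    exact hab (huniq a b v hav hbv)
  refine ⟨D, hor, huniq, fun v => ?_, hout⟩
  choose q hq using hout
  have hinj : Function.Injective q := fun u u' h => huniq u u' (q u) (hq u) (h ▸ hq u')
  obtain ⟨u, rfl⟩ := Finite.surjective_of_injective hinj v
  exact ⟨u, hq u⟩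

theorem totalDomNum_le {V : Type} {D : V → V → Prop} {S : Set V} (hS : TotalDomSet D S) :
    totalDomNum D ≤ S.ncard :=
  Nat.sInf_le ⟨S, hS, rfl⟩

theorem ncard_compl_singleton {V : Type} [Fintype V] (v : V) :
    ({v}ᶜ : Set V).ncard = Fintype.card V - 1 := by
  rw [Set.ncard_compl, Set.ncard_singleton, Nat.card_eq_fintype_card]

/-- If no vertex can be dropped from the trivial total dominating set, then every vertex has at most
one in-neighbor and one out-neighbor, so all degrees are at most two. -/
theorem totalDomNum_le_card_sub_one {V : Type} [Fintype V] {G : SimpleGraph V}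
    {D : V → V → Prop} (hor : IsOrientation G D) (hval : IsValidOrientation D)
    {w : V} (hw : 2 < (G.neighborSet w).ncard) :
    totalDomNum D ≤ Fintype.card V - 1 := by
  by_contra! hlt
  have hpriv : ∀ v, ∃ x, ∀ u, D u x → u = v := by
    intro v
    by_contra! hno
    refine hlt.not_ge ((totalDomNum_le (S := {v}ᶜ) fun x => ?_).trans
      (ncard_compl_singleton v).le)
    obtain ⟨u, hu, hne⟩ := hno x
    exact ⟨u, hne, hu⟩
  choose f hf using hpriv
  have hinj : Function.Injective f := fun v v' h => by
    obtain ⟨u, hu⟩ := hval (f v)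
    exact (hf v u hu).symm.trans (hf v' u (h ▸ hu))
  have hsurj := Finite.surjective_of_injective hinj
  obtain ⟨p, hp⟩ := hsurj w
  have hsub : G.neighborSet w ⊆ {f w, p} := by
    intro x hx
    by_cases hwx : D w x
    · obtain ⟨y, rfl⟩ := hsurj x
      left
      rw [hf y w hwx]
    · right
      exact hf p x (hp ▸ (hor.2 x w (G.adj_symm hx)).2 hwx)
  have := (Set.ncard_le_ncard hsub).trans (Set.ncard_insert_le _ _)
  rw [Set.ncard_singleton] at this
  omega

/-- Orient the 2-regular part with all in-degrees equal to one, and every remaining edge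
towards `s`. -/
theorem exists_orientation_totalDomNum_eq {V : Type} [Fintype V] (G : SimpleGraph V) (s : V)
    (hs : (G.neighborSet s).Nonempty)
    (hreg : ∀ v : V, v ≠ s → (G.neighborSet v \ {s}).ncard = 2) :
    ∃ D : V → V → Prop, IsOrientation G D ∧ IsValidOrientation D ∧
      totalDomNum D = Fintype.card V - 1 := by
  classical
  obtain ⟨E, hor, huniq, hval, hout⟩ :=
    exists_orientation_of_two_regular (G.induce ({s}ᶜ : Set V)) fun v => by
      rw [← hreg v v.2, ← Set.ncard_image_of_injective _ Subtype.val_injective]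
      congr 1
      ext x
      simp [and_comm]
  let D : V → V → Prop := fun u v =>
    (v = s ∧ G.Adj u s) ∨ ∃ (hu : u ≠ s) (hv : v ≠ s), E ⟨u, hu⟩ ⟨v, hv⟩
  have hdom : TotalDomSet D {s}ᶜ := by
    intro v
    by_cases hv : v = s
    · obtain ⟨u, hu⟩ := hs
      exact ⟨u, (G.ne_of_adj hu).symm, Or.inl ⟨hv, G.adj_symm hu⟩⟩
    · obtain ⟨u, hu⟩ := hval ⟨v, hv⟩
      exact ⟨u, u.2, Or.inr ⟨u.2, hv, hu⟩⟩
  refine ⟨D, ⟨?_, ?_⟩, fun v => ?_, le_antisymm ?_ ?_⟩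
  · rintro u v (⟨rfl, h⟩ | ⟨hu, hv, h⟩)
    · exact h
    · exact hor.1 _ _ h
  · intro u v h
    by_cases hu : u = s
    · subst hu
      simp [D, h.ne', h.symm]
    by_cases hv : v = s
    · subst hv
      simp [D, h.ne, h]
    · simpa [D, hu, hv] using hor.2 ⟨u, hu⟩ ⟨v, hv⟩ h
  · obtain ⟨u, -, hu⟩ := hdom v
    exact ⟨u, hu⟩
  · exact (totalDomNum_le hdom).trans (ncard_compl_singleton s).le
  · refine le_csInf ⟨_, _, hdom, rfl⟩ ?_
    rintro _ ⟨S, hS, rfl⟩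
    rw [← ncard_compl_singleton s]
    refine Set.ncard_le_ncard fun v hv => ?_
    obtain ⟨w, hw⟩ := hout ⟨v, hv⟩
    obtain ⟨u, huS, ⟨h, -⟩ | ⟨hu, _, huw⟩⟩ := hS w
    · exact absurd h w.2
    · have huv : u = v := congrArg Subtype.val (huniq _ _ _ huw hw)
      exact huv ▸ huS

/-- If `G` is connected, `s` has degree at least 2, and every other vertex has
exactly two neighbors other than `s` (the induced subgraph on `V ∖ {s}` is
2-regular), then `DOM_t(G) = |V(G)| - 1`: some valid orientation attains
`|V(G)| - 1` and no valid orientation exceeds it. -/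
theorem stmt_10 {V : Type} [Fintype V] (G : SimpleGraph V) (hconn : G.Connected)
    (s : V) (hs : 2 ≤ (G.neighborSet s).ncard)
    (hreg : ∀ v : V, v ≠ s → (G.neighborSet v \ {s}).ncard = 2) :
    DOMt G = Fintype.card V - 1 ∧
      (∃ D : V → V → Prop, IsOrientation G D ∧ IsValidOrientation D ∧
        totalDomNum D = Fintype.card V - 1) ∧
      (∀ D : V → V → Prop, IsOrientation G D → IsValidOrientation D →
        totalDomNum D ≤ Fintype.card V - 1) := by
  obtain ⟨w, hw⟩ : (G.neighborSet s).Nonempty :=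
    Set.nonempty_of_ncard_ne_zero (by omega)
  have hdeg : 2 < (G.neighborSet w).ncard := by
    rw [← hreg w (G.ne_of_adj hw).symm]
    exact Set.ncard_sdiff_singleton_lt_of_mem (G.adj_symm hw)
  have hle := fun D (hor : IsOrientation G D) (hval : IsValidOrientation D) =>
    totalDomNum_le_card_sub_one hor hval hdeg
  have hex := exists_orientation_totalDomNum_eq G s ⟨w, hw⟩ hreg
  refine ⟨IsGreatest.csSup_eq ⟨hex, ?_⟩, hex, hle⟩
  rintro _ ⟨D, hor, hval, rfl⟩
  exact hle D hor hval
end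

section
/- For every integer m ≥ 3 there exists a finite connected simple graph G admitting a valid orientation such that dom_t(G) = m and DOM_t(G) = |V(G)| − 1; that is, some valid orientation D₁ of G has γ_t(D₁) = m, every valid orientation D of G satisfies m ≤ γ_t(D) ≤ |V(G)| − 1, and some valid orientation D₂ of G has γ_t(D₂) = |V(G)| − 1. -/
/-- The arcs of a directed cycle on `k + 3` vertices together with one pendant arc. -/
def PendantCycleArc (k : ℕ) (u v : Fin (k + 4)) : Prop :=
  (∃ i : Fin (k + 3), u = i.castSucc ∧ v = (i + 1).castSucc) ∨
    (u = (0 : Fin (k + 3)).castSucc ∧ v = Fin.last (k + 3))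

/-- The cycle on `k + 3` vertices with one pendant vertex attached. -/
def pendantCycle (k : ℕ) : SimpleGraph (Fin (k + 4)) :=
  SimpleGraph.fromRel (PendantCycleArc k)

theorem Fin.forall_of_add_one {k : ℕ} {p : Fin (k + 1) → Prop} (h0 : p 0)
    (h : ∀ i, p i → p (i + 1)) (i : Fin (k + 1)) : p i := by
  induction i using Fin.induction with
  | zero => exact h0
  | succ i ih => simpa using h _ ih

theorem Fin.forall_of_sub_one {k : ℕ} {p : Fin (k + 1) → Prop} (h0 : p 0)
    (h : ∀ i, p (i + 1) → p i) (i : Fin (k + 1)) : p i := by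
  have key := Fin.forall_of_add_one (p := fun j => p (-j)) (by simpa using h0)
    (fun j hj => h _ (by simpa using hj)) (-i)
  simpa using key

theorem Fin.add_one_add_one_ne (k : ℕ) (i : Fin (k + 3)) : i + 1 + 1 ≠ i := by
  intro h
  rw [add_assoc, add_eq_left] at h
  have := congrArg Fin.val h
  simp [Fin.val_add, Nat.mod_eq_of_lt (show 2 < k + 3 by omega)] at this

theorem not_pendantCycleArc_symm {k : ℕ} {u v : Fin (k + 4)} (h : PendantCycleArc k u v) :
    ¬ PendantCycleArc k v u := by
  rintro (⟨j, rfl, hj⟩ | ⟨rfl, hj⟩) <;> rcases h with ⟨i, hi, hi'⟩ | ⟨hi, hi'⟩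
  · rw [hi] at hj
    have h1 := Fin.castSucc_injective _ hj
    have h2 := Fin.castSucc_injective _ hi'
    exact Fin.add_one_add_one_ne k i (by rw [← h2, ← h1])
  · exact (Fin.castSucc_ne_last _) hi'
  · exact (Fin.castSucc_ne_last _) (hi.symm.trans hj)
  · exact (Fin.castSucc_ne_last _) hi'

theorem isOrientation_pendantCycleArc (k : ℕ) :
    IsOrientation (pendantCycle k) (PendantCycleArc k) := by
  refine ⟨fun u v h => ⟨?_, Or.inl h⟩, fun u v h => ⟨not_pendantCycleArc_symm, fun h' => ?_⟩⟩
  · rintro rfl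
    exact not_pendantCycleArc_symm h h
  · exact h.2.resolve_right h'

theorem isValidOrientation_pendantCycleArc (k : ℕ) :
    IsValidOrientation (PendantCycleArc k) := by
  intro v
  induction v using Fin.lastCases with
  | last => exact ⟨_, Or.inr ⟨rfl, rfl⟩⟩
  | cast i => exact ⟨(i - 1).castSucc, Or.inl ⟨i - 1, rfl, by simp⟩⟩

theorem pendantCycle_connected (k : ℕ) : (pendantCycle k).Connected := by
  have arc {u v} (h : PendantCycleArc k u v) : (pendantCycle k).Reachable u v :=
    ((isOrientation_pendantCycleArc k).1 u v h).reachable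
  refine (SimpleGraph.connected_iff_exists_forall_reachable _).2
    ⟨(0 : Fin (k + 3)).castSucc, fun v => ?_⟩
  induction v using Fin.lastCases with
  | last => exact arc (Or.inr ⟨rfl, rfl⟩)
  | cast i =>
    exact Fin.forall_of_add_one (p := fun i : Fin (k + 3) =>
      (pendantCycle k).Reachable (0 : Fin (k + 3)).castSucc i.castSucc)
      (.refl _) (fun i hi => hi.trans (arc (Or.inl ⟨i, rfl, rfl⟩))) i

section ValidOrientation

variable {k : ℕ} {D : Fin (k + 4) → Fin (k + 4) → Prop}

theorem IsOrientation.asymm {V : Type} {G : SimpleGraph V} {D : V → V → Prop}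
    (hD : IsOrientation G D) {u v : V} (h : D u v) : ¬ D v u :=
  (hD.2 u v (hD.1 u v h)).1 h

theorem pendantCycle_arc_to_last (hD : IsOrientation (pendantCycle k) D) {u : Fin (k + 4)}
    (h : D u (Fin.last (k + 3))) : u = (0 : Fin (k + 3)).castSucc := by
  rcases (hD.1 _ _ h).2 with (⟨i, -, hi⟩ | ⟨hu, -⟩) | (⟨i, hi, -⟩ | ⟨hi, -⟩)
  · exact absurd hi.symm (Fin.castSucc_ne_last _)
  · exact hu
  · exact absurd hi.symm (Fin.castSucc_ne_last _)
  · exact absurd hi.symm (Fin.castSucc_ne_last _)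

/-- The pendant vertex of a valid orientation has no out-neighbor. -/
theorem pendantCycle_not_arc_from_last (hD : IsOrientation (pendantCycle k) D)
    (hV : IsValidOrientation D) (v : Fin (k + 4)) : ¬ D (Fin.last (k + 3)) v := by
  intro h
  obtain ⟨u, hu⟩ := hV (Fin.last (k + 3))
  have hu0 := pendantCycle_arc_to_last hD hu
  rcases (hD.1 _ _ h).2 with (⟨i, hi, -⟩ | ⟨hi, -⟩) | (⟨i, -, hi⟩ | ⟨hv, -⟩)
  · exact absurd hi.symm (Fin.castSucc_ne_last _)
  · exact absurd hi.symm (Fin.castSucc_ne_last _)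
  · exact absurd hi.symm (Fin.castSucc_ne_last _)
  · rw [hv, ← hu0] at h
    exact hD.asymm hu h

/-- An in-neighbor of a cycle vertex is one of its two neighbors on the cycle. -/
theorem pendantCycle_arc_to_castSucc (hD : IsOrientation (pendantCycle k) D)
    (hV : IsValidOrientation D) {u : Fin (k + 4)} {i : Fin (k + 3)}
    (h : D u (i + 1).castSucc) : u = i.castSucc ∨ u = (i + 1 + 1).castSucc := by
  rcases (hD.1 _ _ h).2 with (⟨j, hu, hj⟩ | ⟨-, hi⟩) | (⟨j, hj, hu⟩ | ⟨-, hu⟩)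
  · left
    rw [hu, ← add_right_cancel (Fin.castSucc_injective _ hj)]
  · exact absurd hi (Fin.castSucc_ne_last _)
  · right
    rw [hu, ← Fin.castSucc_injective _ hj]
  · rw [hu] at h
    exact absurd h (pendantCycle_not_arc_from_last hD hV _)

/-- In a valid orientation the cycle is oriented cyclically. -/
theorem pendantCycle_cyclic (hD : IsOrientation (pendantCycle k) D)
    (hV : IsValidOrientation D) :
    (∀ i : Fin (k + 3), D i.castSucc (i + 1).castSucc) ∨
      ∀ i : Fin (k + 3), D (i + 1).castSucc i.castSucc := by
  have hadj : (pendantCycle k).Adj (0 : Fin (k + 3)).castSucc ((0 : Fin (k + 3)) + 1).castSucc :=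
    (isOrientation_pendantCycleArc k).1 _ _ (Or.inl ⟨0, rfl, rfl⟩)
  by_cases h : D (0 : Fin (k + 3)).castSucc ((0 : Fin (k + 3)) + 1).castSucc
  · refine Or.inl (Fin.forall_of_sub_one h fun i hi => ?_)
    obtain ⟨u, hu⟩ := hV (i + 1).castSucc
    rcases pendantCycle_arc_to_castSucc hD hV hu with rfl | rfl
    · exact hu
    · exact absurd hu (hD.asymm hi)
  · refine Or.inr (Fin.forall_of_add_one ((hD.2 _ _ hadj.symm).2 h) fun i hi => ?_)
    obtain ⟨u, hu⟩ := hV (i + 1).castSucc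
    rcases pendantCycle_arc_to_castSucc hD hV hu with rfl | rfl
    · exact absurd hu (hD.asymm hi)
    · exact hu

/-- The total dominating sets of a valid orientation contain the whole cycle. -/
theorem pendantCycle_castSucc_mem (hD : IsOrientation (pendantCycle k) D)
    (hV : IsValidOrientation D) {S : Set (Fin (k + 4))} (hS : TotalDomSet D S)
    (i : Fin (k + 3)) : i.castSucc ∈ S := by
  rcases pendantCycle_cyclic hD hV with h | h
  · obtain ⟨u, huS, hu⟩ := hS (i + 1).castSucc
    rcases pendantCycle_arc_to_castSucc hD hV hu with rfl | rfl
    · exact huS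
    · exact absurd hu (hD.asymm (h _))
  · obtain ⟨j, rfl⟩ : ∃ j, i = j + 1 + 1 := ⟨i - 1 - 1, by simp⟩
    obtain ⟨u, huS, hu⟩ := hS (j + 1).castSucc
    rcases pendantCycle_arc_to_castSucc hD hV hu with rfl | rfl
    · exact absurd hu (hD.asymm (h _))
    · exact huS

theorem totalDomNum_pendantCycle (hD : IsOrientation (pendantCycle k) D)
    (hV : IsValidOrientation D) : totalDomNum D = k + 3 := by
  have hcard : (Set.range (Fin.castSucc (n := k + 3))).ncard = k + 3 := by
    rw [← Set.image_univ, Set.ncard_image_of_injective _ (Fin.castSucc_injective _)]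
    simp [Set.ncard_univ]
  refine IsLeast.csInf_eq ⟨⟨Set.range Fin.castSucc, fun v => ?_, hcard⟩, ?_⟩
  · obtain ⟨u, hu⟩ := hV v
    refine ⟨u, ?_, hu⟩
    induction u using Fin.lastCases with
    | last => exact absurd hu (pendantCycle_not_arc_from_last hD hV v)
    | cast i => exact ⟨i, rfl⟩
  · rintro _ ⟨S, hS, rfl⟩
    rw [← hcard]
    refine Set.ncard_le_ncard ?_ (Set.toFinite S)
    rintro _ ⟨i, rfl⟩
    exact pendantCycle_castSucc_mem hD hV hS i

end ValidOrientation

/-- For every `m ≥ 3` there is a finite connected simple graph `G` admitting a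
valid orientation with `dom_t(G) = m` and `DOM_t(G) = |V(G)| - 1`: some valid
orientation attains `m`, every valid orientation has total domination number
between `m` and `|V(G)| - 1`, and some valid orientation attains `|V(G)| - 1`. -/
theorem stmt_19 :
    ∀ m : ℕ, 3 ≤ m → ∃ (n : ℕ) (G : SimpleGraph (Fin n)),
      G.Connected ∧
      (∃ D₁ : Fin n → Fin n → Prop, IsOrientation G D₁ ∧ IsValidOrientation D₁ ∧
        totalDomNum D₁ = m) ∧
      (∀ D : Fin n → Fin n → Prop, IsOrientation G D → IsValidOrientation D →
        m ≤ totalDomNum D ∧ totalDomNum D ≤ n - 1) ∧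
      (∃ D₂ : Fin n → Fin n → Prop, IsOrientation G D₂ ∧ IsValidOrientation D₂ ∧
        totalDomNum D₂ = n - 1) := by
  intro m hm
  obtain ⟨k, rfl⟩ := Nat.exists_eq_add_of_le' hm
  have hD := isOrientation_pendantCycleArc k
  have hV := isValidOrientation_pendantCycleArc k
  refine ⟨k + 4, pendantCycle k, pendantCycle_connected k,
    ⟨_, hD, hV, totalDomNum_pendantCycle hD hV⟩, fun D h h' => ?_,
    ⟨_, hD, hV, totalDomNum_pendantCycle hD hV⟩⟩
  rw [totalDomNum_pendantCycle h h']
  exact ⟨le_rfl, le_rfl⟩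
end
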